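/- Let T be a selfadjoint operator on a Hilbert space H and let T_r := T − r for r ∈ ℝ. Then Ȟ(T_r) = Ȟ(T) as sets, with equivalence of norms. -/

import Mathlib

/-
Common abstract framework for first-order elliptic boundary value problems
(Bär–Bandara style).  The spaces `HE`, `HF` play the role of the Hilbert spaces
`L²(M;E)`, `L²(M;F)` of square-integrable sections over the manifold `M`, and
`HB` the role of `L²(∂M;E)`.  Unbounded operators are modelled by `LinearPMap`.
-/

noncomputable section

open scoped ComplexInnerProductSpace

namespace BVP

variable {H₁ H₂ : Type*}
variable [NormedAddCommGroup H₁] [InnerProductSpace ℂ H₁]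
variable [NormedAddCommGroup H₂] [InnerProductSpace ℂ H₂]

/-- The graph norm `(‖u‖² + ‖Tu‖²)^(1/2)` of an element of the domain of an
unbounded operator `T`. -/
def graphNorm (T : H₁ →ₗ.[ℂ] H₂) (u : T.domain) : ℝ :=
  Real.sqrt (‖(u : H₁)‖ ^ 2 + ‖T u‖ ^ 2)

/-- A set `S ⊆ H₁` is dense in the domain of the unbounded operator `T` with
respect to the graph norm of `T`. -/
def DenseInGraphNorm (T : H₁ →ₗ.[ℂ] H₂) (S : Set H₁) : Prop :=
  ∀ u : T.domain, ∀ ε : ℝ, 0 < ε →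
    ∃ v : T.domain, (v : H₁) ∈ S ∧ graphNorm T (u - v) < ε

/-- Abstract spectral data for a selfadjoint *adapted boundary operator* `A` on
`HB = L²(∂M;E)` (condition (G1) of the geometric setup): `Pm`, `Pp` are the
spectral projections `χ⁻(A) = χ_{(-∞,0)}(A)` and `χ⁺(A) = χ_{[0,∞)}(A)`,
`absA = |A|` and `sqrtA = |A|^{1/2}`, so that `sqrtA.domain` is `dom |A|^{1/2}`. -/
structure AdaptedOperator (HB : Type*) [NormedAddCommGroup HB]
    [InnerProductSpace ℂ HB] [CompleteSpace HB] where
  /-- the (closure of the essentially) selfadjoint adapted operator `A` -/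
  A : HB →ₗ.[ℂ] HB
  dense_dom : Dense (A.domain : Set HB)
  selfadjoint : A.adjoint = A
  /-- the spectral projection `χ⁻(A) = χ_{(-∞,0)}(A)` -/
  Pm : HB →L[ℂ] HB
  /-- the spectral projection `χ⁺(A) = χ_{[0,∞)}(A)` -/
  Pp : HB →L[ℂ] HB
  Pm_idem : Pm.comp Pm = Pm
  Pp_idem : Pp.comp Pp = Pp
  Pm_sa : IsSelfAdjoint Pm
  Pp_sa : IsSelfAdjoint Pp
  compl : Pm + Pp = ContinuousLinearMap.id ℂ HB
  Pm_dom : ∀ u ∈ A.domain, Pm u ∈ A.domain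
  Pp_dom : ∀ u ∈ A.domain, Pp u ∈ A.domain
  Pm_comm : ∀ u : A.domain, A ⟨Pm u, Pm_dom u u.2⟩ = Pm (A u)
  neg_on_ranPm : ∀ u : A.domain, Pm (u : HB) = (u : HB) → (⟪A u, (u : HB)⟫).re ≤ 0
  pos_on_ranPp : ∀ u : A.domain, Pp (u : HB) = (u : HB) → 0 ≤ (⟪A u, (u : HB)⟫).re
  ker_sub_ranPp : ∀ u : A.domain, A u = 0 → Pp (u : HB) = (u : HB)
  neg_strict : ∀ u : A.domain, Pm (u : HB) = (u : HB) → A u = 0 → (u : HB) = 0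
  /-- the modulus `|A|` -/
  absA : HB →ₗ.[ℂ] HB
  absA_dom : absA.domain = A.domain
  absA_sa : absA.adjoint = absA
  absA_nonneg : ∀ u : absA.domain, 0 ≤ (⟪absA u, (u : HB)⟫).re
  absA_norm : ∀ (u : HB) (hA : u ∈ A.domain) (hB : u ∈ absA.domain),
    ‖absA ⟨u, hB⟩‖ = ‖A ⟨u, hA⟩‖
  /-- the square root `|A|^{1/2}` -/
  sqrtA : HB →ₗ.[ℂ] HB
  sqrtA_sa : sqrtA.adjoint = sqrtA
  sqrtA_nonneg : ∀ u : sqrtA.domain, 0 ≤ (⟪sqrtA u, (u : HB)⟫).re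
  absA_dom_le : absA.domain ≤ sqrtA.domain
  sqrtA_sq_mem : ∀ (u : HB) (h1 : u ∈ sqrtA.domain), u ∈ absA.domain →
    sqrtA ⟨u, h1⟩ ∈ sqrtA.domain
  sqrtA_sq : ∀ (u : HB) (hu : u ∈ absA.domain) (h1 : u ∈ sqrtA.domain)
    (h2 : sqrtA ⟨u, h1⟩ ∈ sqrtA.domain),
      sqrtA ⟨sqrtA ⟨u, h1⟩, h2⟩ = absA ⟨u, hu⟩
  Pm_half : ∀ u ∈ sqrtA.domain, Pm u ∈ sqrtA.domain
  Pp_half : ∀ u ∈ sqrtA.domain, Pp u ∈ sqrtA.domain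

namespace AdaptedOperator

variable {HB : Type*} [NormedAddCommGroup HB] [InnerProductSpace ℂ HB]
  [CompleteSpace HB]

/-- The graph norm of `dom |A|^{1/2}` (the `H^{1/2}(∂M;E)`-norm). -/
def halfNorm (S : AdaptedOperator HB) (u : S.sqrtA.domain) : ℝ :=
  Real.sqrt (‖(u : HB)‖ ^ 2 + ‖S.sqrtA u‖ ^ 2)

/-- The norm of the dual space `(dom |A|^{1/2})^*` (the `H^{-1/2}`-norm),
evaluated on elements of `HB = L²(∂M;E)`. -/
def dualNorm (S : AdaptedOperator HB) (u : HB) : ℝ :=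
  ⨆ v : {v : S.sqrtA.domain // S.halfNorm v ≤ 1}, ‖(⟪u, ((v : S.sqrtA.domain) : HB)⟫ : ℂ)‖

/-- The `Ȟ(A)`-norm `‖χ⁻(A)u‖_{dom |A|^{1/2}} + ‖χ⁺(A)u‖_{(dom |A|^{1/2})^*}`
evaluated on elements of `dom |A|^{1/2}`; the space
`Ȟ(A) = χ⁻(A) dom(|A|^{1/2}) ⊕ χ⁺(A) dom(|A|^{1/2})^*` is the completion of
`dom |A|^{1/2}` with respect to this norm. -/
def checkNorm (S : AdaptedOperator HB) (u : S.sqrtA.domain) : ℝ :=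
  S.halfNorm ⟨S.Pm u, S.Pm_half _ u.2⟩ + S.dualNorm (S.Pp u)

/-- The `Ĥ(A) = Ȟ(−A)`-norm on `dom |A|^{1/2}`. -/
def hatNorm (S : AdaptedOperator HB) (u : S.sqrtA.domain) : ℝ :=
  S.halfNorm ⟨S.Pp u, S.Pp_half _ u.2⟩ + S.dualNorm (S.Pm u)

end AdaptedOperator

/-- A Banach space `Hc`, together with a linear map `j : dom |A|^{1/2} → Hc`,
*realizes* `Ȟ(A)` if `j` is a dense embedding with `‖j u‖ = checkNorm u`;
this exhibits `Hc` as the completion of `dom |A|^{1/2}` in the `Ȟ(A)`-norm,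
i.e. as the space `Ȟ(A)`. -/
structure RealizesCheck {HB : Type*} [NormedAddCommGroup HB] [InnerProductSpace ℂ HB]
    [CompleteSpace HB] (S : AdaptedOperator HB) (Hc : Type*) [NormedAddCommGroup Hc]
    [NormedSpace ℂ Hc] (j : S.sqrtA.domain →ₗ[ℂ] Hc) : Prop where
  dense_range : DenseRange j
  norm_eq : ∀ u, ‖j u‖ = S.checkNorm u

/-- `Hh` together with `j` realizes `Ĥ(A) = Ȟ(−A)` as the completion of
`dom |A|^{1/2}` in the `Ĥ(A)`-norm. -/
structure RealizesHat {HB : Type*} [NormedAddCommGroup HB] [InnerProductSpace ℂ HB]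
    [CompleteSpace HB] (S : AdaptedOperator HB) (Hh : Type*) [NormedAddCommGroup Hh]
    [NormedSpace ℂ Hh] (j : S.sqrtA.domain →ₗ[ℂ] Hh) : Prop where
  dense_range : DenseRange j
  norm_eq : ∀ u, ‖j u‖ = S.hatNorm u

section Helpers

variable {H : Type*} [NormedAddCommGroup H] [InnerProductSpace ℂ H] [CompleteSpace H]

theorem aux_mem_graph_of {T : H →ₗ.[ℂ] H} {u f : H} (h : u ∈ T.domain) (e : T ⟨u, h⟩ = f) :
    (u, f) ∈ T.graph := by
  rw [← e]; exact T.mem_graph ⟨u, h⟩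

theorem aux_graph_dest {T : H →ₗ.[ℂ] H} {u f : H} (h : (u, f) ∈ T.graph) :
    ∃ hu : u ∈ T.domain, T ⟨u, hu⟩ = f := by
  obtain ⟨y, hy, hf⟩ := (LinearPMap.mem_graph_iff T).1 h
  simp only at hy hf
  subst hy
  exact ⟨y.2, hf⟩

theorem aux_graph_symm {T : H →ₗ.[ℂ] H} (hd : Dense (T.domain : Set H)) (hT : T.adjoint = T)
    {u f v g : H} (h : (u, f) ∈ T.graph) (h' : (v, g) ∈ T.graph) : ⟪f, v⟫ = ⟪u, g⟫ := by
  have := LinearPMap.adjoint_isFormalAdjoint hd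
  rw [hT] at this
  obtain ⟨hu, rfl⟩ := aux_graph_dest h
  obtain ⟨hv, rfl⟩ := aux_graph_dest h'
  exact this ⟨u, hu⟩ ⟨v, hv⟩

theorem aux_graph_mem {T : H →ₗ.[ℂ] H} (hd : Dense (T.domain : Set H)) (hT : T.adjoint = T)
    {u f : H} (h : ∀ v g, (v, g) ∈ T.graph → ⟪f, v⟫ = ⟪u, g⟫) : (u, f) ∈ T.graph := by
  have h1 : ∀ x : T.domain, ⟪f, (x : H)⟫ = ⟪u, T x⟫ := fun x => h _ _ (T.mem_graph x)
  have h2 : u ∈ T.adjoint.domain := LinearPMap.mem_adjoint_domain_of_exists _ ⟨f, h1⟩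
  have h3 := LinearPMap.adjoint_apply_eq hd ⟨u, h2⟩ h1
  have := aux_mem_graph_of h2 h3
  rwa [hT] at this

theorem aux_re_zero {D : Submodule ℂ H} (hd : Dense (D : Set H)) {f : H}
    {M : ℝ} (hM : 0 ≤ M) (h : ∀ w ∈ D, (⟪f, w⟫).re ≤ M * ‖w‖) : ‖f‖ ≤ M := by
  have h1 : ∀ w : H, (⟪f, w⟫).re ≤ M * ‖w‖ := by
    intro w
    have hc : IsClosed {w : H | (⟪f, w⟫).re ≤ M * ‖w‖} := by
      apply isClosed_le
      · exact Complex.continuous_re.comp (by fun_prop)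
      · fun_prop
    have := hc.closure_subset_iff.2 (fun w hw => h w hw) (hd w)
    exact this
  have h2 := h1 f
  have h3 : (⟪f, f⟫).re = ‖f‖ * ‖f‖ := by
    have := inner_self_eq_norm_mul_norm (𝕜 := ℂ) f
    simpa using this
  rw [h3] at h2
  rcases eq_or_lt_of_le (norm_nonneg f) with h4 | h4
  · rw [← h4]; exact hM
  · exact le_of_mul_le_mul_right h2 h4

theorem aux_sa_inner {R : H →L[ℂ] H} (h : IsSelfAdjoint R) (u v : H) : ⟪R u, v⟫ = ⟪u, R v⟫ :=
  (ContinuousLinearMap.isSelfAdjoint_iff_isSymmetric.1 h) u v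

theorem aux_re_symm (u v : H) : (⟪u, v⟫).re = (⟪v, u⟫).re := by
  rw [← inner_conj_symm, Complex.conj_re]

/-- Cauchy-Schwarz for the form `re ⟪A u, R w⟫`. -/
theorem aux_cs {T : H →ₗ.[ℂ] H} (hd : Dense (T.domain : Set H)) (hT : T.adjoint = T)
    {R : H →L[ℂ] H} (hR : IsSelfAdjoint R)
    (hc : ∀ u f, (u, f) ∈ T.graph → (R u, R f) ∈ T.graph)
    (hp : ∀ u f, (u, f) ∈ T.graph → 0 ≤ (⟪f, R u⟫).re)
    {u f w g : H} (h : (u, f) ∈ T.graph) (h' : (w, g) ∈ T.graph) :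
    (⟪f, R w⟫).re ^ 2 ≤ (⟪f, R u⟫).re * (⟪g, R w⟫).re := by
  have hs : (⟪g, R u⟫).re = (⟪f, R w⟫).re := by
    rw [aux_graph_symm hd hT h (hc _ _ h'), ← aux_sa_inner hR, aux_re_symm]
  have key : ∀ t : ℝ, 0 ≤ (⟪g, R w⟫).re * (t * t) + (2 * (⟪f, R w⟫).re) * t + (⟪f, R u⟫).re := by
    intro t
    have h1 := hp (u + (t : ℂ) • w) (f + (t : ℂ) • g)
      (T.graph.add_mem h (T.graph.smul_mem (t : ℂ) h'))
    simp only [Prod.smul_mk, map_add, map_smul, inner_add_left, inner_add_right,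
      inner_smul_left, inner_smul_right, Complex.add_re, Complex.conj_ofReal,
      Complex.re_ofReal_mul, hs] at h1
    linarith
  have := discrim_le_zero key
  unfold discrim at this
  nlinarith

theorem aux_contr {R : H →L[ℂ] H} (hR : IsSelfAdjoint R) (hi : ∀ u, R (R u) = R u) (u : H) :
    ‖R u‖ ≤ ‖u‖ := by
  have h1 : (⟪R u, R u⟫).re = ‖R u‖ * ‖R u‖ := by
    simpa using inner_self_eq_norm_mul_norm (𝕜 := ℂ) (R u)
  have h2 : (⟪R u, R u⟫).re ≤ ‖u‖ * ‖R u‖ := by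
    rw [aux_sa_inner hR, hi]
    exact (Complex.re_le_norm _).trans (norm_inner_le_norm _ _)
  rcases eq_or_lt_of_le (norm_nonneg (R u)) with h4 | h4
  · rw [← h4]; exact norm_nonneg _
  · exact le_of_mul_le_mul_right (h1 ▸ h2) h4

namespace AdaptedOperator

theorem mm (S : AdaptedOperator H) (u : H) : S.Pm (S.Pm u) = S.Pm u :=
  DFunLike.congr_fun S.Pm_idem u

theorem pp (S : AdaptedOperator H) (u : H) : S.Pp (S.Pp u) = S.Pp u :=
  DFunLike.congr_fun S.Pp_idem u

theorem decomp (S : AdaptedOperator H) (u : H) : S.Pm u + S.Pp u = u :=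
  DFunLike.congr_fun S.compl u

theorem mp (S : AdaptedOperator H) (u : H) : S.Pm (S.Pp u) = 0 := by
  have h := S.decomp (S.Pp u)
  rw [S.pp] at h
  simpa using h

theorem pm (S : AdaptedOperator H) (u : H) : S.Pp (S.Pm u) = 0 := by
  have h := S.decomp (S.Pm u)
  rw [S.mm] at h
  simpa using h

theorem graph_m (S : AdaptedOperator H) {u f : H} (h : (u, f) ∈ S.A.graph) :
    (S.Pm u, S.Pm f) ∈ S.A.graph := by
  obtain ⟨hu, rfl⟩ := aux_graph_dest h
  exact aux_mem_graph_of (S.Pm_dom u hu) (S.Pm_comm ⟨u, hu⟩)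

theorem graph_p (S : AdaptedOperator H) {u f : H} (h : (u, f) ∈ S.A.graph) :
    (S.Pp u, S.Pp f) ∈ S.A.graph := by
  have h1 := S.A.graph.sub_mem h (S.graph_m h)
  have e : ∀ v, v - S.Pm v = S.Pp v := fun v => by
    nth_rewrite 1 [← S.decomp v]; simp
  simpa [e] using h1

theorem neg_m (S : AdaptedOperator H) {u f : H} (h : (u, f) ∈ S.A.graph) (hu : S.Pm u = u) :
    (⟪f, u⟫).re ≤ 0 := by
  obtain ⟨hu', rfl⟩ := aux_graph_dest h
  exact S.neg_on_ranPm ⟨u, hu'⟩ hu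

theorem pos_p (S : AdaptedOperator H) {u f : H} (h : (u, f) ∈ S.A.graph) (hu : S.Pp u = u) :
    0 ≤ (⟪f, u⟫).re := by
  obtain ⟨hu', rfl⟩ := aux_graph_dest h
  exact S.pos_on_ranPp ⟨u, hu'⟩ hu

theorem neg_m2 (S : AdaptedOperator H) {u f : H} (h : (u, f) ∈ S.A.graph) :
    (⟪f, S.Pm u⟫).re ≤ 0 := by
  have := S.neg_m (S.graph_m h) (S.mm u)
  rwa [aux_sa_inner S.Pm_sa, S.mm] at this

theorem pos_p2 (S : AdaptedOperator H) {u f : H} (h : (u, f) ∈ S.A.graph) :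
    0 ≤ (⟪f, S.Pp u⟫).re := by
  have := S.pos_p (S.graph_p h) (S.pp u)
  rwa [aux_sa_inner S.Pp_sa, S.pp] at this

section comm

variable (S : AdaptedOperator H) (Q : H →L[ℂ] H) (hQ : IsSelfAdjoint Q)
  (hi : ∀ u, Q (Q u) = Q u) (hc : ∀ u f, (u, f) ∈ S.A.graph → (Q u, Q f) ∈ S.A.graph)
include hQ hi hc

theorem comm_bound (n : ℕ) : ∀ u f, (u, f) ∈ S.A.graph →
    -(⟪f, S.Pm u⟫).re + 2 * n * (⟪f, S.Pm (Q (S.Pp (Q (S.Pm u))))⟫).re ≤ ‖f‖ * ‖u‖ := by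
  set Z : H →L[ℂ] H := S.Pm.comp (Q.comp (S.Pp.comp (Q.comp S.Pm))) with hZ
  have eZ : ∀ u, S.Pm (Q (S.Pp (Q (S.Pm u)))) = Z u := fun u => rfl
  have gZ : ∀ u f, (u, f) ∈ S.A.graph → (Z u, Z f) ∈ S.A.graph := fun u f h =>
    S.graph_m (hc _ _ (S.graph_p (hc _ _ (S.graph_m h))))
  have sZ : ∀ u v, ⟪Z u, v⟫ = ⟪u, Z v⟫ := fun u v => by
    rw [← eZ, ← eZ, aux_sa_inner S.Pm_sa, aux_sa_inner hQ, aux_sa_inner S.Pp_sa,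
      aux_sa_inner hQ, aux_sa_inner S.Pm_sa]
  have pZ : ∀ u, S.Pm (Z u) = Z u := fun u => by rw [← eZ, S.mm]
  have Zp : ∀ u, Z (S.Pm u) = Z u := fun u => by rw [← eZ, ← eZ, S.mm]
  have bpos : ∀ u f, (u, f) ∈ S.A.graph → 0 ≤ (⟪f, Z u⟫).re := fun u f h => by
    have := S.pos_p2 (hc _ _ (S.graph_m h))
    rwa [aux_sa_inner hQ, aux_sa_inner S.Pm_sa] at this
  have Wc : ∀ u, ‖u - Z u‖ ≤ ‖u‖ := fun u => by
    have h1 : ‖Z u‖ ≤ ‖S.Pp (Q (S.Pm u))‖ :=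
      (aux_contr S.Pm_sa S.mm _).trans (aux_contr hQ hi _)
    have h2 : (⟪u, Z u⟫).re = ‖S.Pp (Q (S.Pm u))‖ ^ 2 := by
      have : (⟪S.Pp (Q (S.Pm u)), S.Pp (Q (S.Pm u))⟫).re = ‖S.Pp (Q (S.Pm u))‖ ^ 2 := by
        simpa using inner_self_eq_norm_sq (𝕜 := ℂ) (S.Pp (Q (S.Pm u)))
      rw [← this, aux_sa_inner S.Pp_sa, aux_sa_inner hQ, aux_sa_inner S.Pm_sa, S.pp, eZ]
    have h3 := norm_sub_sq (𝕜 := ℂ) u (Z u)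
    simp only [RCLike.re_to_complex, h2] at h3
    have h4 : ‖Z u‖ ^ 2 ≤ ‖S.Pp (Q (S.Pm u))‖ ^ 2 := by gcongr
    apply le_of_sq_le_sq _ (norm_nonneg _)
    nlinarith [sq_nonneg ‖S.Pp (Q (S.Pm u))‖]
  simp only [eZ]
  induction n with
  | zero =>
    intro u f h
    have h1 : |(⟪f, S.Pm u⟫).re| ≤ ‖f‖ * ‖u‖ :=
      (Complex.abs_re_le_norm _).trans ((norm_inner_le_norm _ _).trans (by
        gcongr; exact aux_contr S.Pm_sa S.mm _))
    have := neg_abs_le (⟪f, S.Pm u⟫).re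
    simp; linarith
  | succ n ih =>
    intro u f h
    have h1 := ih _ _ (S.A.graph.sub_mem h (gZ _ _ h))
    have h2 : ‖f - Z f‖ * ‖u - Z u‖ ≤ ‖f‖ * ‖u‖ := by
      gcongr
      · exact Wc f
      · exact Wc u
    have e1 : ⟪Z f, S.Pm u⟫ = ⟪f, Z u⟫ := by rw [sZ, Zp]
    have e2 : ⟪f, Z (Z u)⟫ = ⟪Z f, Z u⟫ := (sZ _ _).symm
    have p1 : (⟪Z f, Z u⟫).re ≤ 0 := by
      have := S.neg_m2 (gZ _ _ h); rwa [pZ] at this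
    have p2 := bpos _ _ h
    have p3 := bpos _ _ (gZ _ _ h)
    simp only [map_sub, inner_sub_left, inner_sub_right, Complex.sub_re, pZ, e1, e2] at h1
    have hn : (0:ℝ) ≤ n := Nat.cast_nonneg n
    push_cast
    nlinarith [mul_nonneg hn p3, mul_nonneg hn (neg_nonneg.2 p1)]

theorem comm_zero (h : H) : S.Pm (Q (S.Pp h)) = 0 := by
  have step : ∀ u f, (u, f) ∈ S.A.graph → S.Pp (Q (S.Pm f)) = 0 := by
    intro u f hu
    have gY := S.graph_p (hc _ _ (S.graph_m hu))
    have b0 : (⟪f, S.Pm (Q (S.Pp (Q (S.Pm u))))⟫).re ≤ 0 := by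
      by_contra hb
      push Not at hb
      obtain ⟨n, hn⟩ := exists_nat_gt ((‖f‖ * ‖u‖) / (⟪f, S.Pm (Q (S.Pp (Q (S.Pm u))))⟫).re)
      rw [div_lt_iff₀ hb] at hn
      have h1 := S.comm_bound Q hQ hi hc n u f hu
      have h2 := S.neg_m2 hu
      have h3 : 0 ≤ ‖f‖ * ‖u‖ := by positivity
      nlinarith
    have b1 : (⟪S.Pp (Q (S.Pm f)), S.Pp (S.Pp (Q (S.Pm u)))⟫).re ≤ 0 := by
      rwa [aux_sa_inner S.Pp_sa, aux_sa_inner hQ, aux_sa_inner S.Pm_sa, S.pp, S.pp]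
    have : ‖S.Pp (Q (S.Pm f))‖ ≤ 0 := by
      apply aux_re_zero S.dense_dom le_rfl
      intro w hw
      have h1 := aux_cs S.dense_dom S.selfadjoint S.Pp_sa (fun _ _ h => S.graph_p h)
        (fun _ _ h => S.pos_p2 h) gY (S.A.mem_graph ⟨w, hw⟩)
      have h2 := S.pos_p2 (S.A.mem_graph ⟨w, hw⟩)
      have h3 := S.pos_p2 gY
      have h4 : (⟪S.Pp (Q (S.Pm f)), S.Pp (S.Pp (Q (S.Pm u)))⟫).re = 0 := le_antisymm b1 h3
      rw [h4, zero_mul, ← aux_sa_inner S.Pp_sa, S.pp] at h1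
      have := pow_eq_zero_iff (two_ne_zero) |>.1 (le_antisymm h1 (sq_nonneg _))
      simp only at this
      rw [this]; simp
    exact norm_le_zero_iff.1 this
  have hg : (S.Pm (Q (S.Pp h)), (0 : H)) ∈ S.A.graph := by
    apply aux_graph_mem S.dense_dom S.selfadjoint
    intro v g hv
    rw [aux_sa_inner S.Pm_sa, aux_sa_inner hQ, aux_sa_inner S.Pp_sa, step v g hv]
    simp
  obtain ⟨h1, h2⟩ := aux_graph_dest hg
  have h3 := S.ker_sub_ranPp ⟨_, h1⟩ h2
  simp only [S.pm] at h3
  exact h3.symm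

theorem comm_pq (h : H) : S.Pp (Q h) = Q (S.Pp h) := by
  have h1 : ∀ h, S.Pp (Q (S.Pp h)) = Q (S.Pp h) := fun h => by
    have := S.decomp (Q (S.Pp h))
    rwa [S.comm_zero Q hQ hi hc, zero_add] at this
  rw [← h1]
  apply ext_inner_right ℂ
  intro v
  rw [aux_sa_inner S.Pp_sa, aux_sa_inner hQ, ← h1, aux_sa_inner S.Pp_sa, aux_sa_inner hQ,
    aux_sa_inner S.Pp_sa]

end comm

end AdaptedOperator

/-- A commuting projection on whose range the operator is bounded maps into the domain. -/
theorem aux_range_dom {T : H →ₗ.[ℂ] H} (hd : Dense (T.domain : Set H)) (hT : T.adjoint = T)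
    {R : H →L[ℂ] H} (hR : IsSelfAdjoint R) (hi : ∀ u, R (R u) = R u)
    (hc : ∀ u f, (u, f) ∈ T.graph → (R u, R f) ∈ T.graph)
    (hp : ∀ u f, (u, f) ∈ T.graph → 0 ≤ (⟪f, R u⟫).re) (c : ℝ) (hc0 : 0 ≤ c)
    (hb : ∀ u f, (u, f) ∈ T.graph → (⟪f, R u⟫).re ≤ c * ‖u‖ ^ 2) (u : H) :
    R u ∈ T.domain := by
  have key : ∀ v g, (v, g) ∈ T.graph → ‖R g‖ ≤ c * ‖v‖ := by
    intro v g hv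
    apply aux_re_zero hd (by positivity)
    intro w hw
    have hw' := T.mem_graph ⟨w, hw⟩
    have h1 := aux_cs hd hT hR hc hp hv hw'
    have h2 := hb _ _ hv
    have h3 := hb _ _ hw'
    have h4 := hp _ _ hw'
    rw [aux_sa_inner hR]
    apply le_of_sq_le_sq _ (by positivity)
    calc _ ≤ _ := h1
      _ ≤ (c * ‖v‖ ^ 2) * (c * ‖w‖ ^ 2) := by
        apply mul_le_mul h2 h3 h4 (by positivity)
      _ = _ := by ring
  rw [← hT, LinearPMap.mem_adjoint_domain_iff]
  apply AddMonoidHomClass.continuous_of_bound _ (‖u‖ * c)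
  intro x
  have h1 : ((innerₛₗ ℂ (R u)).comp T.toFun) x = ⟪u, R (T x)⟫ := by
    rw [← aux_sa_inner hR]; rfl
  rw [h1]
  refine (norm_inner_le_norm _ _).trans ?_
  rw [mul_assoc]
  gcongr
  exact key _ _ (T.mem_graph x)

/-- Closed graph theorem for operators with closed graphs. -/
theorem aux_closed_graph {S₁ S₂ : H →ₗ.[ℂ] H} (h₁ : S₁.IsClosed) (h₂ : S₂.IsClosed)
    (B : H →L[ℂ] H) (hB : ∀ u ∈ S₁.domain, B u ∈ S₂.domain) :
    ∃ C : ℝ, 0 ≤ C ∧ ∀ u f g, (u, f) ∈ S₁.graph → (B u, g) ∈ S₂.graph →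
      ‖g‖ ≤ C * Real.sqrt (‖u‖ ^ 2 + ‖f‖ ^ 2) := by
  have : CompleteSpace S₁.graph := completeSpace_coe_iff_isComplete.mpr
    (IsClosed.isComplete (show IsClosed (S₁.graph : Set (H × H)) from h₁))
  have hm : ∀ x : S₁.graph, B x.1.1 ∈ S₂.domain := fun x =>
    hB _ (LinearPMap.mem_domain_of_mem_graph (y := x.1.2) x.2)
  let φ : S₁.graph →ₗ[ℂ] H := S₂.toFun.comp
    (LinearMap.codRestrict S₂.domain
      ((B : H →ₗ[ℂ] H).comp ((LinearMap.fst ℂ H H).comp S₁.graph.subtype)) hm)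
  have hφ : ∀ x : S₁.graph, (B x.1.1, φ x) ∈ S₂.graph := fun x => S₂.mem_graph ⟨_, hm x⟩
  have hcont : Continuous φ := by
    apply LinearMap.continuous_of_seq_closed_graph
    intro a x y ha hy
    have hlim : Filter.Tendsto (fun n => (B (a n).1.1, φ (a n))) Filter.atTop
        (nhds (B x.1.1, y)) := by
      apply Filter.Tendsto.prodMk_nhds
      · exact ((by fun_prop : Continuous fun z : S₁.graph => B z.1.1).tendsto x).comp ha
      · exact hy
    have hmem : (B x.1.1, y) ∈ S₂.graph :=
      IsClosed.mem_of_tendsto (show IsClosed (S₂.graph : Set (H × H)) from h₂) hlim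
        (Filter.Eventually.of_forall fun n => hφ (a n))
    exact S₂.mem_graph_snd_inj hmem (hφ x) rfl
  let ψ : S₁.graph →L[ℂ] H := ⟨φ, hcont⟩
  refine ⟨‖ψ‖, ψ.opNorm_nonneg, fun u f g hu hg => ?_⟩
  have e : g = ψ ⟨(u, f), hu⟩ := S₂.mem_graph_snd_inj hg (hφ ⟨(u, f), hu⟩) rfl
  rw [e]
  refine (ψ.le_opNorm _).trans ?_
  gcongr
  show max ‖u‖ ‖f‖ ≤ _
  apply max_le <;> apply Real.le_sqrt_of_sq_le <;> nlinarith [sq_nonneg ‖u‖, sq_nonneg ‖f‖]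

namespace AdaptedOperator

theorem sqrt_closed (S : AdaptedOperator H) : S.sqrtA.IsClosed :=
  IsSelfAdjoint.isClosed S.sqrtA_sa

theorem dom_le (S : AdaptedOperator H) : S.A.domain ≤ S.sqrtA.domain := by
  rw [← S.absA_dom]; exact S.absA_dom_le

theorem half_nonneg (S : AdaptedOperator H) (u : S.sqrtA.domain) : 0 ≤ S.halfNorm u :=
  Real.sqrt_nonneg _

theorem norm_le_half (S : AdaptedOperator H) (u : S.sqrtA.domain) : ‖(u : H)‖ ≤ S.halfNorm u :=
  Real.le_sqrt_of_sq_le (by nlinarith [sq_nonneg ‖S.sqrtA u‖])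

theorem sqrt_le_half (S : AdaptedOperator H) (u : S.sqrtA.domain) : ‖S.sqrtA u‖ ≤ S.halfNorm u :=
  Real.le_sqrt_of_sq_le (by nlinarith [sq_nonneg ‖(u : H)‖])

theorem half_le (S : AdaptedOperator H) (u : S.sqrtA.domain) :
    S.halfNorm u ≤ ‖(u : H)‖ + ‖S.sqrtA u‖ :=
  Real.sqrt_le_iff.2 ⟨by positivity, by
    nlinarith [mul_nonneg (norm_nonneg (u : H)) (norm_nonneg (S.sqrtA u))]⟩

theorem half_smul (S : AdaptedOperator H) (t : ℂ) (u : S.sqrtA.domain) :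
    S.halfNorm (t • u) = ‖t‖ * S.halfNorm u := by
  unfold halfNorm
  rw [S.sqrtA.map_smul, Submodule.coe_smul, norm_smul, norm_smul, mul_pow, mul_pow, ← mul_add,
    Real.sqrt_mul (sq_nonneg _), Real.sqrt_sq (norm_nonneg _)]

/-- bounded maps between the half spaces -/
theorem half_bound (S S' : AdaptedOperator H) (B : H →L[ℂ] H)
    (hB : ∀ u ∈ S.sqrtA.domain, B u ∈ S'.sqrtA.domain) :
    ∃ C : ℝ, 0 ≤ C ∧ ∀ (u : S.sqrtA.domain) (h : B u ∈ S'.sqrtA.domain),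
      S'.halfNorm ⟨B u, h⟩ ≤ C * S.halfNorm u := by
  obtain ⟨C, hC, h⟩ := aux_closed_graph S.sqrt_closed S'.sqrt_closed B hB
  refine ⟨‖B‖ + C, by positivity, fun u hu => ?_⟩
  refine (S'.half_le _).trans ?_
  rw [add_mul]
  apply add_le_add
  · exact (B.le_opNorm _).trans (by gcongr; exact S.norm_le_half u)
  · exact h _ _ _ (S.sqrtA.mem_graph u) (S'.sqrtA.mem_graph ⟨B u, hu⟩)

theorem half_bound' (S' : AdaptedOperator H) (B : H →L[ℂ] H)
    (hB : ∀ u, B u ∈ S'.sqrtA.domain) :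
    ∃ C : ℝ, 0 ≤ C ∧ ∀ (u : H) (h : B u ∈ S'.sqrtA.domain),
      S'.halfNorm ⟨B u, h⟩ ≤ C * ‖u‖ := by
  let S : H →ₗ.[ℂ] H := (0 : H →ₗ[ℂ] H).toPMap ⊤
  have hS : ∀ u, (u, (0 : H)) ∈ S.graph := fun u => S.mem_graph ⟨u, trivial⟩
  have hcl : S.IsClosed := by
    have : (S.graph : Set (H × H)) = {x | x.2 = 0} := by
      ext x
      constructor
      · intro hx
        exact S.mem_graph_snd_inj hx (hS x.1) rfl
      · rintro hx
        have := hS x.1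
        rw [← show x.2 = 0 from hx] at this
        exact this
    unfold LinearPMap.IsClosed
    rw [this]
    exact isClosed_eq continuous_snd continuous_const
  obtain ⟨C, hC, h⟩ := aux_closed_graph hcl S'.sqrt_closed B (fun u _ => hB u)
  refine ⟨‖B‖ + C, by positivity, fun u hu => ?_⟩
  refine (S'.half_le _).trans ?_
  rw [add_mul]
  apply add_le_add
  · exact B.le_opNorm _
  · have := h _ _ _ (hS u) (S'.sqrtA.mem_graph ⟨B u, hu⟩)
    simpa using this

theorem dual_bdd (S : AdaptedOperator H) (u : H) : BddAbove (Set.range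
    fun v : {v : S.sqrtA.domain // S.halfNorm v ≤ 1} => ‖(⟪u, ((v : S.sqrtA.domain) : H)⟫ : ℂ)‖) := by
  refine ⟨‖u‖, ?_⟩
  rintro _ ⟨v, rfl⟩
  refine (norm_inner_le_norm _ _).trans ?_
  exact mul_le_of_le_one_right (norm_nonneg _) ((S.norm_le_half _).trans v.2)

theorem dual_nonneg (S : AdaptedOperator H) (u : H) : 0 ≤ S.dualNorm u :=
  Real.iSup_nonneg fun _ => norm_nonneg _

theorem pair_le (S : AdaptedOperator H) (u : H) (w : S.sqrtA.domain) :
    ‖⟪u, (w : H)⟫‖ ≤ S.dualNorm u * S.halfNorm w := by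
  rcases eq_or_lt_of_le (S.half_nonneg w) with h | h
  · have h1 := S.norm_le_half w
    rw [← h] at h1
    have : (w : H) = 0 := norm_le_zero_iff.1 h1
    rw [this, ← h]; simp
  · set t : ℂ := (((S.halfNorm w)⁻¹ : ℝ) : ℂ) with ht
    have hn : ‖t‖ = (S.halfNorm w)⁻¹ := by
      rw [ht, Complex.norm_real, Real.norm_of_nonneg (inv_nonneg.2 h.le)]
    have h1 : S.halfNorm (t • w) ≤ 1 := by
      rw [half_smul, hn, inv_mul_cancel₀ h.ne']
    have h2 := le_ciSup (S.dual_bdd u) ⟨t • w, h1⟩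
    simp only [Submodule.coe_smul, inner_smul_right, norm_mul, hn] at h2
    have h3 : (S.halfNorm w)⁻¹ * ‖⟪u, (w : H)⟫‖ ≤ S.dualNorm u := h2
    rwa [inv_mul_le_iff₀ h, mul_comm] at h3

theorem dual_le (S : AdaptedOperator H) (u : H) (M : ℝ) (hM : 0 ≤ M)
    (h : ∀ w : S.sqrtA.domain, ‖⟪u, (w : H)⟫‖ ≤ M * S.halfNorm w) : S.dualNorm u ≤ M := by
  apply Real.iSup_le _ hM
  intro v
  exact (h v.1).trans (mul_le_of_le_one_right hM v.2)

theorem check_nonneg (S : AdaptedOperator H) (u : S.sqrtA.domain) : 0 ≤ S.checkNorm u :=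
  add_nonneg (S.half_nonneg _) (S.dual_nonneg _)

theorem half_add_le (S : AdaptedOperator H) (a b : S.sqrtA.domain) :
    S.halfNorm (a + b) ≤ 2 * (S.halfNorm a + S.halfNorm b) := by
  refine (S.half_le _).trans ?_
  have h1 := norm_add_le (a : H) b
  have h2 := norm_add_le (S.sqrtA a) (S.sqrtA b)
  rw [S.sqrtA.map_add, Submodule.coe_add]
  linarith [S.norm_le_half a, S.norm_le_half b, S.sqrt_le_half a, S.sqrt_le_half b]

theorem one_sided (S S' : AdaptedOperator H) (r : ℝ)
    (hsh : ∀ u f, (u, f) ∈ S.A.graph ↔ (u, f - (r : ℂ) • u) ∈ S'.A.graph)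
    (hW : S'.sqrtA.domain = S.sqrtA.domain) :
    ∃ C : ℝ, 0 ≤ C ∧ ∀ (u : H) (h : u ∈ S.sqrtA.domain) (h' : u ∈ S'.sqrtA.domain),
      S'.checkNorm ⟨u, h'⟩ ≤ C * S.checkNorm ⟨u, h⟩ := by
  have hc : ∀ u f, (u, f) ∈ S.A.graph → (S'.Pm u, S'.Pm f) ∈ S.A.graph := by
    intro u f h
    rw [hsh] at h ⊢
    simpa using S'.graph_m h
  have hcomm := S.comm_pq S'.Pm S'.Pm_sa S'.mm hc
  set R : H →L[ℂ] H := S'.Pm.comp S.Pp with hRdef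
  have eR : ∀ u, R u = S'.Pm (S.Pp u) := fun _ => rfl
  have Rsym : ∀ u v, ⟪R u, v⟫ = ⟪u, R v⟫ := fun u v => by
    rw [eR, eR, aux_sa_inner S'.Pm_sa, aux_sa_inner S.Pp_sa, hcomm]
  have Rsa : IsSelfAdjoint R := ContinuousLinearMap.isSelfAdjoint_iff_isSymmetric.2 Rsym
  have Ri : ∀ u, R (R u) = R u := fun u => by
    rw [eR, eR, hcomm, S.pp, S'.mm]
  have Rc : ∀ u f, (u, f) ∈ S.A.graph → (R u, R f) ∈ S.A.graph := fun u f h =>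
    hc _ _ (S.graph_p h)
  have Rp : ∀ u, S.Pp (R u) = R u := fun u => by rw [eR, hcomm, S.pp]
  have pR : ∀ u, R (S.Pp u) = R u := fun u => by rw [eR, eR, S.pp]
  have Rq : ∀ u, S'.Pm (R u) = R u := fun u => by rw [eR, S'.mm]
  have RR : ∀ u f, ⟪R f, R u⟫ = ⟪f, R u⟫ := fun u f => by rw [Rsym, Ri]
  have Rdom : ∀ u, R u ∈ S.A.domain := by
    apply aux_range_dom S.dense_dom S.selfadjoint Rsa Ri Rc _ |r| (abs_nonneg r)
    · intro u f h
      have h1 := S'.neg_m ((hsh _ _).1 (Rc _ _ h)) (Rq u)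
      have h2 : (⟪R u, R u⟫).re = ‖R u‖ ^ 2 := by
        simpa using inner_self_eq_norm_sq (𝕜 := ℂ) (R u)
      rw [inner_sub_left, RR, inner_smul_left, Complex.sub_re, Complex.conj_ofReal,
        Complex.re_ofReal_mul, h2] at h1
      have h3 : ‖R u‖ ^ 2 ≤ ‖u‖ ^ 2 := by
        gcongr; exact aux_contr Rsa Ri u
      calc _ ≤ r * ‖R u‖ ^ 2 := by linarith
        _ ≤ |r| * ‖R u‖ ^ 2 := by gcongr; exact le_abs_self r
        _ ≤ _ := by gcongr
    · intro u f h
      rw [← RR]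
      exact S.pos_p (Rc _ _ h) (Rp u)
  have Rhalf : ∀ u, R u ∈ S.sqrtA.domain := fun u => S.dom_le (Rdom u)
  have Rhalf' : ∀ u, R u ∈ S'.sqrtA.domain := fun u => by rw [hW]; exact Rhalf u
  obtain ⟨C1, hC1, b1⟩ := S.half_bound S' S'.Pm (fun u hu => S'.Pm_half _ (by rw [hW]; exact hu))
  obtain ⟨C2, hC2, b2⟩ := S'.half_bound' R Rhalf'
  obtain ⟨C3, hC3, b3⟩ := S.half_bound' R Rhalf
  obtain ⟨C4, hC4, b4⟩ := S'.half_bound S S'.Pp (fun u hu => by rw [← hW]; exact S'.Pp_half _ hu)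
  refine ⟨2 * C1 + 2 * (C2 * C3) + 1 + C4, by positivity, fun u h h' => ?_⟩
  unfold checkNorm
  simp only
  set a := S.halfNorm ⟨S.Pm u, S.Pm_half _ h⟩ with ha
  set d := S.dualNorm (S.Pp u) with hd
  have ha0 : 0 ≤ a := S.half_nonneg _
  have hd0 : 0 ≤ d := S.dual_nonneg _
  -- the smoothing piece
  have hRu : ‖R u‖ ≤ C3 * d := by
    have h1 : ‖R u‖ * ‖R u‖ ≤ (C3 * d) * ‖R u‖ := by
      have e1 : ‖R u‖ * ‖R u‖ = ‖⟪S.Pp u, R (R u)⟫‖ := by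
        rw [← Rsym, pR, inner_self_eq_norm_sq_to_K]
        simp [sq]
      rw [e1]
      have h2 := S.pair_le (S.Pp u) ⟨R (R u), Rhalf _⟩
      have h3 := b3 (R u) (Rhalf _)
      calc _ ≤ _ := h2
        _ ≤ d * (C3 * ‖R u‖) := by gcongr
        _ = _ := by ring
    rcases eq_or_lt_of_le (norm_nonneg (R u)) with h4 | h4
    · rw [← h4]; positivity
    · exact le_of_mul_le_mul_right h1 h4
  have p1 : S'.halfNorm ⟨S'.Pm u, S'.Pm_half _ h'⟩ ≤ 2 * (C1 * a + C2 * (C3 * d)) := by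
    have m1 : S'.Pm (S.Pm u) ∈ S'.sqrtA.domain :=
      S'.Pm_half _ (by rw [hW]; exact S.Pm_half _ h)
    have e : (⟨S'.Pm u, S'.Pm_half _ h'⟩ : S'.sqrtA.domain)
        = ⟨S'.Pm (S.Pm u), m1⟩ + ⟨R (R u), Rhalf' _⟩ := by
      apply Subtype.ext
      rw [Submodule.coe_add]
      simp only
      rw [Ri, eR, ← map_add, S.decomp]
    rw [e]
    refine (S'.half_add_le _ _).trans ?_
    have h1 := b1 ⟨S.Pm u, S.Pm_half _ h⟩ m1
    have h2 := b2 (R u) (Rhalf' _)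
    have h3 : C2 * ‖R u‖ ≤ C2 * (C3 * d) := by gcongr
    linarith
  have p2 : S'.dualNorm (S'.Pp u) ≤ a + C4 * d := by
    apply S'.dual_le _ _ (by positivity)
    intro w
    have m1 : S'.Pp w ∈ S.sqrtA.domain := by rw [← hW]; exact S'.Pp_half _ w.2
    have e : ⟪S'.Pp u, (w : H)⟫ = ⟪S.Pm u, S'.Pp w⟫ + ⟪S.Pp u, S'.Pp w⟫ := by
      rw [← inner_add_left, S.decomp, aux_sa_inner S'.Pp_sa]
    rw [e]
    refine (norm_add_le _ _).trans ?_
    have h1 : ‖⟪S.Pm u, S'.Pp w⟫‖ ≤ a * S'.halfNorm w := by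
      refine (norm_inner_le_norm _ _).trans ?_
      apply mul_le_mul (S.norm_le_half ⟨S.Pm u, S.Pm_half _ h⟩) _ (norm_nonneg _) ha0
      exact (aux_contr S'.Pp_sa S'.pp _).trans (S'.norm_le_half w)
    have h2 := S.pair_le (S.Pp u) ⟨S'.Pp w, m1⟩
    have h3 : d * S.halfNorm ⟨S'.Pp w, m1⟩ ≤ d * (C4 * S'.halfNorm w) := by
      gcongr; exact b4 w m1
    have h4 : ‖⟪S.Pp u, S'.Pp w⟫‖ ≤ d * S.halfNorm ⟨S'.Pp w, m1⟩ := h2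
    nlinarith
  have q1 : 0 ≤ C1 * d := by positivity
  have q2 : 0 ≤ C2 * C3 * a := by positivity
  have q3 : 0 ≤ C4 * a := by positivity
  nlinarith

end AdaptedOperator

end Helpers

section Shift

variable {H : Type*} [NormedAddCommGroup H] [InnerProductSpace ℂ H] [CompleteSpace H]

/-- **Proposition: invariance of `Ȟ(T)` under real shifts.**
Let `T` be a selfadjoint operator on a Hilbert space `H` and `T_r := T − r`
for `r ∈ ℝ`.  Then `Ȟ(T_r) = Ȟ(T)` as sets, with equivalence of norms.

Here `ST` and `STr` are the spectral packages of `T` and `T_r` (comprising the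
spectral projections `χ∓`, the modulus and its square root, with
`dom |T_r|^{1/2} = dom |T|^{1/2}`), and `checkNorm` is the `Ȟ`-norm
`‖χ⁻ u‖_{dom |·|^{1/2}} + ‖χ⁺ u‖_{dom |·|^{1/2}^*}` on the common dense
subspace `dom |T|^{1/2}`; since `Ȟ(T)` and `Ȟ(T_r)` are the completions of
`dom |T|^{1/2}` in the respective norms, the two-sided norm equivalence below
expresses that `Ȟ(T_r) = Ȟ(T)` with equivalent norms. -/
theorem statement19_check_space_shift_invariance
    (ST STr : AdaptedOperator H) (r : ℝ)
    -- `T_r = T − r`: same domain, shifted values: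
    (hdom : STr.A.domain = ST.A.domain)
    (hshift : ∀ (u : H) (h : u ∈ ST.A.domain) (h' : u ∈ STr.A.domain),
      STr.A ⟨u, h'⟩ = ST.A ⟨u, h⟩ - (r : ℂ) • u)
    -- `dom |T_r|^{1/2} = dom |T|^{1/2}`:
    (hW : STr.sqrtA.domain = ST.sqrtA.domain) :
    ∃ c C : ℝ, 0 < c ∧
      ∀ u : ST.sqrtA.domain,
        c * ST.checkNorm u ≤ STr.checkNorm ⟨(u : H), by rw [hW]; exact u.2⟩ ∧
        STr.checkNorm ⟨(u : H), by rw [hW]; exact u.2⟩ ≤ C * ST.checkNorm u := by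
  have hsh : ∀ u f, (u, f) ∈ ST.A.graph ↔ (u, f - (r : ℂ) • u) ∈ STr.A.graph := by
    intro u f
    constructor
    · intro h
      obtain ⟨hu, rfl⟩ := aux_graph_dest h
      exact aux_mem_graph_of (by rw [hdom]; exact hu) (hshift u hu _)
    · intro h
      obtain ⟨hu, he⟩ := aux_graph_dest h
      have hu' : u ∈ ST.A.domain := by rw [← hdom]; exact hu
      rw [hshift u hu' hu] at he
      exact aux_mem_graph_of hu' (sub_left_injective he)
  have hsh' : ∀ u f, (u, f) ∈ STr.A.graph ↔ (u, f - ((-r : ℝ) : ℂ) • u) ∈ ST.A.graph := by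
    intro u f
    rw [hsh]
    simp
  obtain ⟨C, hC, h1⟩ := AdaptedOperator.one_sided ST STr r hsh hW
  obtain ⟨C', hC', h2⟩ := AdaptedOperator.one_sided STr ST (-r) hsh' hW.symm
  refine ⟨(C' + 1)⁻¹, C, by positivity, fun u => ?_⟩
  have hu : (u : H) ∈ STr.sqrtA.domain := by rw [hW]; exact u.2
  refine ⟨?_, h1 u u.2 hu⟩
  rw [inv_mul_le_iff₀ (by positivity)]
  have h3 : ST.checkNorm u ≤ C' * STr.checkNorm ⟨u, hu⟩ := h2 u hu u.2
  have h4 := STr.check_nonneg ⟨u, hu⟩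
  nlinarith

end Shift

end BVP
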